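/- For all real α, β > −1 and all fixed j, k ∈ ℕ, lim_{n→∞} K_{n−1}^{(j,k)}(1,1)/n^{2α+2j+2k+2} = 1/(Γ(α+j+1)·Γ(α+k+1)·2^{α+β+j+k+1}·(α+j+k+1)). -/

import Mathlib

open Polynomial Filter

/-- The Jacobi polynomial `P_n^{(α,β)}` as a real polynomial. -/
noncomputable def jacobiP (α β : ℝ) (n : ℕ) : Polynomial ℝ :=
  ∑ k ∈ Finset.range (n + 1),
    Polynomial.C (Real.Gamma (n + α + 1) / (Real.Gamma ((n : ℝ) - k + 1) * Real.Gamma (α + k + 1)) *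
        (Real.Gamma (n + β + 1) / (Real.Gamma ((k : ℝ) + 1) * Real.Gamma ((n : ℝ) - k + β + 1)))) *
      (Polynomial.C (2⁻¹ : ℝ) * (Polynomial.X - 1)) ^ k *
      (Polynomial.C (2⁻¹ : ℝ) * (Polynomial.X + 1)) ^ (n - k)

/-- The squared Jacobi norm `‖P_n^{(α,β)}‖²`. -/
noncomputable def jacobiNormSq (α β : ℝ) (n : ℕ) : ℝ :=
  ∫ x in (-1 : ℝ)..1, (jacobiP α β n).eval x ^ 2 * (1 - x) ^ α * (1 + x) ^ β

/-- The kernel `K_n^{(j,k)}(x,y)`. -/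
noncomputable def kernK (α β : ℝ) (j k n : ℕ) (x y : ℝ) : ℝ :=
  ∑ i ∈ Finset.range (n + 1),
    (Polynomial.derivative^[j] (jacobiP α β i)).eval x *
      (Polynomial.derivative^[k] (jacobiP α β i)).eval y / jacobiNormSq α β i

/-- The kernel `K_n^{(j,0)}(1,·)` as a polynomial. -/
noncomputable def kernKPoly (α β : ℝ) (j n : ℕ) : Polynomial ℝ :=
  ∑ i ∈ Finset.range (n + 1),
    Polynomial.C ((Polynomial.derivative^[j] (jacobiP α β i)).eval 1 / jacobiNormSq α β i) *
      jacobiP α β i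

/-- The varying Sobolev inner product `(f,g)_{S,n}` with mass `m`. -/
noncomputable def sobInner (α β : ℝ) (j : ℕ) (m : ℝ) (f g : Polynomial ℝ) : ℝ :=
  (∫ x in (-1 : ℝ)..1, f.eval x * g.eval x * (1 - x) ^ α * (1 + x) ^ β) +
    m * (Polynomial.derivative^[j] f).eval 1 * (Polynomial.derivative^[j] g).eval 1

/-- The Jacobi–Sobolev orthogonal polynomial `Q_n`. -/
noncomputable def sobQ (α β : ℝ) (j : ℕ) (Ms : ℕ → ℝ) (n : ℕ) : Polynomial ℝ :=
  jacobiP α β n -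
    Polynomial.C (Ms n * (Polynomial.derivative^[j] (jacobiP α β n)).eval 1 /
        (1 + Ms n * kernK α β j j (n - 1) 1 1)) *
      kernKPoly α β j (n - 1)

/-!
In the variable `s = (1 + x) / 2` the Jacobi polynomial becomes a polynomial `S_n` whose Taylor
coefficients at `s = 1` are products of two generalised binomial coefficients, by the
Chu–Vandermonde identity. This evaluates the derivatives of `P_n` at `1` and, in top degree, the
leading coefficient of `S_n`. Integrating `S_n` against `s ^ m` with the Jacobi weight term by term
gives an `n`-th finite difference of a polynomial of degree `m`, which vanishes for `m < n`; hence
`‖P_n‖²` is a leading coefficient times a single Beta-type integral. By the asymptotics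
`Γ(n + a + 1) / Γ(n + b + 1) ~ n ^ (a - b)`, the `n`-th summand of the kernel is asymptotic to
`c * n ^ (2α + 2j + 2k + 1)`, and comparison with a telescoping sum adds these summands up.
-/

open Asymptotics Finset MeasureTheory Topology

theorem real_gamma_add_natCast {x : ℝ} (hx : ∀ i : ℕ, x ≠ -i) (m : ℕ) :
    Real.Gamma (x + m) = (ascPochhammer ℝ m).eval x * Real.Gamma x := by
  induction m with
  | zero => simp
  | succ m ih =>
    have hxm : x + m ≠ 0 := fun h => hx m (eq_neg_of_add_eq_zero_left h)
    rw [Nat.cast_succ, ← add_assoc, Real.Gamma_add_one hxm, ih, ascPochhammer_succ_eval]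
    ring

theorem ring_choose_eq_gamma_div {x : ℝ} {m : ℕ} (hx : ∀ i : ℕ, x - m + 1 ≠ -i) :
    Ring.choose x m =
      Real.Gamma (x + 1) / (Real.Gamma ((m : ℝ) + 1) * Real.Gamma (x - m + 1)) := by
  have hasc := Ring.factorial_nsmul_multichoose_eq_ascPochhammer (x - m + 1) m
  rw [ascPochhammer_smeval_eq_eval, nsmul_eq_mul] at hasc
  have hΓ := real_gamma_add_natCast hx m
  rw [show x - m + 1 + m = x + 1 by ring, ← hasc] at hΓ
  have hΓ0 := Real.Gamma_ne_zero hx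
  rw [Ring.choose, hΓ, Real.Gamma_nat_eq_factorial]
  field_simp

theorem ring_choose_natCast_add_sub {x : ℝ} {n k : ℕ} (hk : k ≤ n) (hx : ∀ i : ℕ, x + k + 1 ≠ -i) :
    Ring.choose ((n : ℝ) + x) (n - k) =
      Real.Gamma (n + x + 1) / (Real.Gamma ((n : ℝ) - k + 1) * Real.Gamma (x + k + 1)) := by
  have hsub : (n : ℝ) + x - (n - k : ℕ) + 1 = x + k + 1 := by rw [Nat.cast_sub hk]; ring
  rw [ring_choose_eq_gamma_div (hsub ▸ hx), hsub, Nat.cast_sub hk]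

theorem ne_neg_natCast_of_pos {x : ℝ} (hx : 0 < x) (i : ℕ) : x ≠ -i := by
  have := i.cast_nonneg (α := ℝ)
  linarith

theorem gamma_natCast_add_add_one_isEquivalent_of_ne {a : ℝ} (ha : ∀ i : ℕ, a ≠ -i) :
    (fun n : ℕ => Real.Gamma (n + a + 1)) ~[atTop] fun n => Real.Gamma (n + 1) * (n : ℝ) ^ a := by
  have hΓ := Real.Gamma_ne_zero ha
  have hprod (m : ℕ) : ∏ i ∈ range m, (a + i) = (ascPochhammer ℝ m).eval a :=
    prod_range_induction _ (fun m => (ascPochhammer ℝ m).eval a) (by simp) m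
      fun i _ => ascPochhammer_succ_eval i a
  have hlim : Tendsto (fun n => Real.Gamma a / Real.GammaSeq a n) atTop (𝓝 1) := by
    have := (tendsto_const_nhds (x := Real.Gamma a)).div (Real.GammaSeq_tendsto_Gamma a) hΓ
    rwa [div_self hΓ] at this
  refine isEquivalent_of_tendsto_one (hlim.congr fun n => ?_)
  rw [Real.GammaSeq, hprod, Pi.div_apply, Real.Gamma_nat_eq_factorial,
    show (n : ℝ) + a + 1 = a + (n + 1 : ℕ) by push_cast; ring, real_gamma_add_natCast ha]
  simp only [div_eq_mul_inv, mul_inv, inv_inv]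
  ring

theorem natCast_add_isEquivalent (a : ℝ) : (fun n : ℕ => (n : ℝ) + a) ~[atTop] fun n => (n : ℝ) :=
  IsEquivalent.refl.add_isLittleO <|
    (isLittleO_const_id_atTop a).comp_tendsto tendsto_natCast_atTop_atTop

theorem gamma_natCast_add_add_one_isEquivalent (a : ℝ) :
    (fun n : ℕ => Real.Gamma (n + a + 1)) ~[atTop] fun n => Real.Gamma (n + 1) * (n : ℝ) ^ a := by
  -- Euler's limit degenerates at the poles of `Γ`, which are reached by descending from `a + 1`.
  obtain ⟨N, hN⟩ := exists_nat_gt (-a)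
  induction N generalizing a with
  | zero =>
    exact gamma_natCast_add_add_one_isEquivalent_of_ne
      (ne_neg_natCast_of_pos (by push_cast at hN; linarith))
  | succ N ih =>
    have hstep := (ih (a + 1) (by push_cast at hN; linarith)).div (natCast_add_isEquivalent (a + 1))
    refine (hstep.congr_left ?_).congr_right ?_
    · have hlarge : ∀ᶠ n : ℕ in atTop, -(a + 1) < n :=
        tendsto_natCast_atTop_atTop.eventually_gt_atTop _
      filter_upwards [hlarge] with n hn
      have hpole : (n : ℝ) + (a + 1) ≠ 0 := by linarith
      rw [Pi.div_apply, Real.Gamma_add_one hpole, mul_div_cancel_left₀ _ hpole, add_assoc]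
    · filter_upwards [eventually_ne_atTop 0] with n hn
      have hn0 : (n : ℝ) ≠ 0 := Nat.cast_ne_zero.2 hn
      rw [Pi.div_apply, Real.rpow_add_one hn0, ← mul_assoc, mul_div_cancel_right₀ _ hn0]

theorem gamma_natCast_add_div_gamma_isEquivalent (a b : ℝ) :
    (fun n : ℕ => Real.Gamma (n + a + 1) / Real.Gamma (n + b + 1)) ~[atTop]
      fun n => (n : ℝ) ^ (a - b) := by
  refine ((gamma_natCast_add_add_one_isEquivalent a).div
    (gamma_natCast_add_add_one_isEquivalent b)).congr_right ?_
  filter_upwards [eventually_gt_atTop 0] with n hn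
  have hn0 : (0 : ℝ) < n := Nat.cast_pos.2 hn
  have hΓ : Real.Gamma (n + 1) ≠ 0 := (Real.Gamma_pos_of_pos (by positivity)).ne'
  rw [Pi.div_apply, mul_div_mul_left _ _ hΓ, ← Real.rpow_sub hn0]

theorem ring_choose_natCast_add_sub_isEquivalent {x : ℝ} {j : ℕ}
    (hx : ∀ i : ℕ, x + j + 1 ≠ -i) :
    (fun n : ℕ => Ring.choose ((n : ℝ) + x) (n - j)) ~[atTop]
      fun n => (n : ℝ) ^ (x + j) / Real.Gamma (x + j + 1) := by
  have hΓ := gamma_natCast_add_div_gamma_isEquivalent x (-j)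
  rw [sub_neg_eq_add] at hΓ
  refine (hΓ.div (IsEquivalent.refl (u := fun _ => Real.Gamma (x + j + 1)))).congr_left ?_
  filter_upwards [eventually_ge_atTop j] with n hn
  rw [ring_choose_natCast_add_sub hn hx, Pi.div_apply, ← sub_eq_add_neg, div_div]

theorem ring_choose_natCast_add_natCast_isEquivalent (x : ℝ) (j : ℕ) :
    (fun n : ℕ => Ring.choose ((n : ℝ) + x + j) j) ~[atTop]
      fun n => (n : ℝ) ^ j / j.factorial := by
  have hΓ := gamma_natCast_add_div_gamma_isEquivalent (x + j) x
  simp_rw [add_sub_cancel_left, Real.rpow_natCast] at hΓ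
  refine (hΓ.div (IsEquivalent.refl (u := fun _ => (j.factorial : ℝ)))).congr_left ?_
  filter_upwards [tendsto_natCast_atTop_atTop.eventually_gt_atTop (-x - 1)] with n hn
  have hpole : 0 < (n : ℝ) + x + j - j + 1 := by linarith
  rw [ring_choose_eq_gamma_div (ne_neg_natCast_of_pos hpole), add_sub_cancel_right,
    Real.Gamma_nat_eq_factorial, Pi.div_apply, div_div, mul_comm, add_assoc (n : ℝ) x j]

theorem rpow_succ_sub_rpow_isEquivalent {q : ℝ} (hq : q ≠ 0) :
    (fun n : ℕ => ((n : ℝ) + 1) ^ q - (n : ℝ) ^ q) ~[atTop] fun n => q * (n : ℝ) ^ (q - 1) := by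
  have hderiv : HasDerivAt (fun x : ℝ => x ^ q) q 1 := by
    simpa using Real.hasDerivAt_rpow_const (x := 1) (p := q) (Or.inl one_ne_zero)
  have hslope : Tendsto (fun n : ℕ => (n : ℝ) * ((1 + (n : ℝ)⁻¹) ^ q - 1)) atTop (𝓝 q) := by
    simpa [Function.comp_def] using hderiv.tendsto_slope_zero_right.comp
      (tendsto_inv_atTop_nhdsGT_zero.comp (tendsto_natCast_atTop_atTop (R := ℝ)))
  refine (((isEquivalent_const_iff_tendsto hq).2 hslope).mul
    (IsEquivalent.refl (u := fun n : ℕ => (n : ℝ) ^ (q - 1)))).congr_left ?_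
  filter_upwards [eventually_gt_atTop 0] with n hn
  have hn0 : (0 : ℝ) < n := Nat.cast_pos.2 hn
  have hsplit : (n : ℝ) + 1 = n * (1 + (n : ℝ)⁻¹) := by field_simp
  rw [hsplit, Real.mul_rpow hn0.le (by positivity), Pi.mul_apply, Real.rpow_sub_one hn0.ne']
  field_simp

theorem sum_range_isEquivalent_of_rpow {f : ℕ → ℝ} {p c : ℝ} (hp : -1 < p) (hc : c ≠ 0)
    (hf : f ~[atTop] fun n : ℕ => c * (n : ℝ) ^ p) :
    (fun n => ∑ i ∈ range n, f i) ~[atTop] fun n : ℕ => c * ((n : ℝ) ^ (p + 1) / (p + 1)) := by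
  have hp' : 0 < p + 1 := by linarith
  let t (i : ℕ) : ℝ := (((i : ℝ) + 1) ^ (p + 1) - (i : ℝ) ^ (p + 1)) / (p + 1)
  have ht : t ~[atTop] fun n : ℕ => (n : ℝ) ^ p := by
    refine ((rpow_succ_sub_rpow_isEquivalent hp'.ne').div
      (IsEquivalent.refl (u := fun _ => p + 1))).congr_right ?_
    filter_upwards with n
    rw [Pi.div_apply, add_sub_cancel_right, mul_div_cancel_left₀ _ hp'.ne']
  have ht_nonneg : 0 ≤ t := fun i => by
    have : (i : ℝ) ^ (p + 1) ≤ ((i : ℝ) + 1) ^ (p + 1) := by gcongr; linarith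
    exact div_nonneg (sub_nonneg.2 this) hp'.le
  have ht_sum (n : ℕ) : ∑ i ∈ range n, t i = (n : ℝ) ^ (p + 1) / (p + 1) := by
    have htel := sum_range_sub (fun i : ℕ => (i : ℝ) ^ (p + 1)) n
    push_cast at htel
    rw [← sum_div, htel, Real.zero_rpow hp'.ne', sub_zero]
  have ht_atTop : Tendsto (fun n => ∑ i ∈ range n, t i) atTop atTop := by
    simp_rw [ht_sum]
    exact ((tendsto_rpow_atTop hp').comp tendsto_natCast_atTop_atTop).atTop_div_const hp'
  have hft : f ~[atTop] fun n => c * t n :=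
    hf.trans ((IsEquivalent.refl (u := fun _ => c)).mul ht).symm
  have hsum := hft.isLittleO.of_const_mul_right.sum_range ht_nonneg ht_atTop
  simp_rw [Pi.sub_apply, sum_sub_distrib, ← mul_sum, ht_sum] at hsum
  exact hsum.trans_isBigO (isBigO_self_const_mul hc _ _)

theorem sum_neg_one_pow_mul_choose_mul_eval {R : Type*} [CommRing R] {p : R[X]} {n : ℕ}
    (hp : p.natDegree ≤ n) (y : R) :
    ∑ k ∈ range (n + 1), (-1) ^ k * (n.choose k : R) * p.eval (y + (n - k : ℕ)) =
      n.factorial * p.coeff n := by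
  have hdiff : (fwdDiff (1 : R))^[n] p.eval y = n.factorial * p.coeff n := by
    obtain hlt | rfl := hp.lt_or_eq
    · rw [fwdDiff_iter_eq_zero_of_degree_lt hlt, coeff_eq_zero_of_natDegree_lt hlt]
      simp
    · rw [fwdDiff_iter_degree_eq_factorial]
      simp [mul_comm]
  rw [← hdiff, fwdDiff_iter_eq_sum_shift, ← sum_range_reflect]
  refine sum_congr rfl fun k hk => ?_
  have hk' : k ≤ n := mem_range_succ_iff.1 hk
  rw [Nat.add_sub_cancel, Nat.choose_symm hk', Nat.sub_sub_self hk']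
  simp

theorem ofReal_one_sub_rpow_mul_rpow {s : ℝ} (hs : s ∈ Set.Icc 0 1) (a b : ℝ) :
    (((1 - s) ^ a * s ^ b : ℝ) : ℂ) =
      (s : ℂ) ^ (((b + 1 : ℝ) : ℂ) - 1) * (1 - s) ^ (((a + 1 : ℝ) : ℂ) - 1) := by
  rw [Complex.ofReal_mul, Complex.ofReal_cpow (sub_nonneg.2 hs.2), Complex.ofReal_cpow hs.1]
  push_cast
  rw [add_sub_cancel_right, add_sub_cancel_right, mul_comm]

theorem intervalIntegrable_one_sub_rpow_mul_rpow {a b : ℝ} (ha : -1 < a) (hb : -1 < b) :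
    IntervalIntegrable (fun s : ℝ => (1 - s) ^ a * s ^ b) volume 0 1 := by
  have hbeta := Complex.betaIntegral_convergent (u := (b + 1 : ℝ)) (v := (a + 1 : ℝ))
    (by rw [Complex.ofReal_re]; linarith) (by rw [Complex.ofReal_re]; linarith)
  rw [intervalIntegrable_iff_integrableOn_Ioc_of_le zero_le_one] at hbeta ⊢
  refine hbeta.re.congr (ae_restrict_of_forall_mem measurableSet_Ioc fun s hs => ?_)
  simp [← ofReal_one_sub_rpow_mul_rpow (Set.Ioc_subset_Icc_self hs), -Complex.ofReal_add]

theorem integral_one_sub_rpow_mul_rpow {a b : ℝ} (ha : -1 < a) (hb : -1 < b) :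
    ∫ s in (0 : ℝ)..1, (1 - s) ^ a * s ^ b = ProbabilityTheory.beta (b + 1) (a + 1) := by
  rw [ProbabilityTheory.beta_eq_betaIntegralReal _ _ (by linarith) (by linarith),
    Complex.betaIntegral, ← Complex.ofReal_re (∫ s in (0 : ℝ)..1, (1 - s) ^ a * s ^ b),
    ← intervalIntegral.integral_ofReal]
  congr 1
  refine intervalIntegral.integral_congr fun s hs => ?_
  rw [Set.uIcc_of_le zero_le_one] at hs
  exact ofReal_one_sub_rpow_mul_rpow hs a b

theorem intervalIntegrable_mul_one_sub_rpow_mul_rpow {a b : ℝ} (ha : -1 < a) (hb : -1 < b)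
    {f : ℝ → ℝ} (hf : Continuous f) :
    IntervalIntegrable (fun s : ℝ => f s * ((1 - s) ^ a * s ^ b)) volume 0 1 :=
  (intervalIntegrable_one_sub_rpow_mul_rpow ha hb).continuousOn_mul hf.continuousOn

theorem integral_sub_one_pow_mul_pow_mul_one_sub_rpow_mul_rpow {a b : ℝ} (ha : -1 < a)
    (hb : -1 < b) (k l : ℕ) :
    ∫ s in (0 : ℝ)..1, (s - 1) ^ k * s ^ l * ((1 - s) ^ a * s ^ b) =
      (-1) ^ k * ProbabilityTheory.beta (b + l + 1) (a + k + 1) := by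
  rw [← integral_one_sub_rpow_mul_rpow (by linarith [k.cast_nonneg (α := ℝ)])
      (by linarith [l.cast_nonneg (α := ℝ)]),
    ← intervalIntegral.integral_const_mul]
  refine intervalIntegral.integral_congr_Ioo_of_le zero_le_one fun s hs => ?_
  have hs' : 0 < 1 - s := sub_pos.2 hs.2
  rw [Real.rpow_add_natCast hs'.ne', Real.rpow_add_natCast hs.1.ne', ← neg_sub 1 s,
    neg_pow (1 - s)]
  ring

theorem coeff_taylor_of_natDegree_le {R : Type*} [CommSemiring R] {p : R[X]} {n : ℕ}
    (hp : p.natDegree ≤ n) (r : R) : (taylor r p).coeff n = p.coeff n := by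
  obtain hlt | rfl := hp.lt_or_eq
  · rw [coeff_eq_zero_of_natDegree_lt hlt,
      coeff_eq_zero_of_natDegree_lt (by rwa [natDegree_taylor])]
  · exact coeff_taylor_natDegree r p

theorem eval_iterate_derivative_eq_factorial_mul_coeff_taylor {R : Type*} [CommSemiring R]
    (p : R[X]) (j : ℕ) (r : R) :
    (derivative^[j] p).eval r = j.factorial * (taylor r p).coeff j := by
  rw [taylor_coeff, ← factorial_smul_hasseDeriv]
  simp

/-- The shifted Jacobi polynomial `P_n^{(α,β)}(2s - 1)` in the variable `s = (1 + x) / 2`, which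
moves the orthogonality interval to `[0, 1]` and keeps `1` fixed. The Gamma quotients become
`Ring.choose`, the binomial coefficient with a real upper entry, which has no poles. -/
noncomputable def shiftedJacobi (α β : ℝ) (n : ℕ) : ℝ[X] :=
  ∑ k ∈ range (n + 1),
    C (Ring.choose ((n : ℝ) + α) (n - k) * Ring.choose ((n : ℝ) + β) k) *
      ((X - 1) ^ k * X ^ (n - k))

theorem natDegree_shiftedJacobi_le (α β : ℝ) (n : ℕ) : (shiftedJacobi α β n).natDegree ≤ n := by
  refine natDegree_sum_le_of_forall_le _ _ fun k hk => (natDegree_C_mul_le _ _).trans ?_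
  have hk' : k ≤ n := mem_range_succ_iff.1 hk
  have hdeg : ((X - 1 : ℝ[X]) ^ k * X ^ (n - k)).natDegree ≤ k + (n - k) := by
    compute_degree
  lia

theorem coeff_taylor_one_shiftedJacobi (α β : ℝ) {n j : ℕ} (hj : j ≤ n) :
    (taylor 1 (shiftedJacobi α β n)).coeff j =
      Ring.choose ((n : ℝ) + α) (n - j) * Ring.choose ((n : ℝ) + α + β + j) j := by
  have hterm (k : ℕ) : (taylor 1 ((X - 1 : ℝ[X]) ^ k * X ^ (n - k))).coeff j =
      if k ≤ j then ((n - k).choose (j - k) : ℝ) else 0 := by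
    simp [taylor_mul, coeff_X_pow_mul', coeff_X_add_one_pow]
  have hchoose {k : ℕ} (hk : k ≤ j) :
      ((n - k).choose (j - k) : ℝ) * Ring.choose ((n : ℝ) + α) (n - k) =
        Ring.choose ((n : ℝ) + α) (n - j) * Ring.choose (α + j) (j - k) := by
    have hsmul := Ring.choose_smul_choose ((n : ℝ) + α) (Nat.sub_le_sub_left hk n)
    rw [show n - k - (n - j) = j - k by lia, nsmul_eq_mul, Nat.cast_sub hj,
      ← Nat.choose_symm (by lia), show n - k - (n - j) = j - k by lia] at hsmul
    rw [hsmul]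
    ring_nf
  calc (taylor 1 (shiftedJacobi α β n)).coeff j
      = ∑ k ∈ range (n + 1), if k ≤ j then Ring.choose ((n : ℝ) + α) (n - k) *
          Ring.choose ((n : ℝ) + β) k * ((n - k).choose (j - k) : ℝ) else 0 := by
        simp only [shiftedJacobi, map_sum, finsetSum_coeff, taylor_mul _ (C _), taylor_C,
          coeff_C_mul, hterm, mul_ite, mul_zero]
    _ = ∑ k ∈ range (j + 1), Ring.choose ((n : ℝ) + α) (n - j) *
          (Ring.choose ((n : ℝ) + β) k * Ring.choose (α + j) (j - k)) := by
        rw [← sum_filter]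
        refine sum_congr (by ext; simp only [mem_filter, mem_range]; lia) fun k hk => ?_
        linear_combination Ring.choose ((n : ℝ) + β) k * hchoose (mem_range_succ_iff.1 hk)
    _ = Ring.choose ((n : ℝ) + α) (n - j) * Ring.choose ((n : ℝ) + α + β + j) j := by
        rw [← mul_sum, show (n : ℝ) + α + β + j = n + β + (α + j) by ring,
          Ring.add_choose_eq (r := (n : ℝ) + β) (s := α + j) j (Commute.all _ _),
          Nat.sum_antidiagonal_eq_sum_range_succ_mk]

theorem coeff_shiftedJacobi_self (α β : ℝ) (n : ℕ) :
    (shiftedJacobi α β n).coeff n = Ring.choose ((n : ℝ) + α + β + n) n := by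
  rw [← coeff_taylor_of_natDegree_le (natDegree_shiftedJacobi_le α β n) 1,
    coeff_taylor_one_shiftedJacobi α β le_rfl, Nat.sub_self, Ring.choose_zero_right, one_mul]

section Jacobi

variable {α β : ℝ}

theorem ring_choose_natCast_add (hβ : -1 < β) {n k : ℕ} (hk : k ≤ n) :
    Ring.choose ((n : ℝ) + β) k =
      Real.Gamma (n + β + 1) / (Real.Gamma ((k : ℝ) + 1) * Real.Gamma ((n : ℝ) - k + β + 1)) := by
  have hk' : (k : ℝ) ≤ n := Nat.cast_le.2 hk
  rw [ring_choose_eq_gamma_div (ne_neg_natCast_of_pos (by linarith)),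
    sub_add_eq_add_sub (n : ℝ) k β]

theorem jacobiP_eq_shiftedJacobi_comp (hα : -1 < α) (hβ : -1 < β) (n : ℕ) :
    jacobiP α β n = (shiftedJacobi α β n).comp (C 2⁻¹ * (X + 1)) := by
  have hhalf : (C 2⁻¹ : ℝ[X]) * (X + 1) - 1 = C 2⁻¹ * (X - 1) := by
    have : (C 2⁻¹ : ℝ[X]) * 2 = 1 := by rw [← C_ofNat, ← C_mul]; norm_num
    linear_combination this
  simp only [jacobiP, shiftedJacobi, Polynomial.sum_comp, mul_comp, pow_comp, sub_comp, X_comp,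
    one_comp, C_comp, hhalf]
  refine sum_congr rfl fun k hk => ?_
  have hk' : k ≤ n := mem_range_succ_iff.1 hk
  have hαk : 0 < α + k + 1 := by linarith [k.cast_nonneg (α := ℝ)]
  rw [ring_choose_natCast_add_sub hk' (ne_neg_natCast_of_pos hαk),
    ring_choose_natCast_add hβ hk', mul_assoc]

theorem eval_one_iterate_derivative_jacobiP (hα : -1 < α) (hβ : -1 < β) {n j : ℕ} (hj : j ≤ n) :
    (derivative^[j] (jacobiP α β n)).eval 1 = j.factorial * 2⁻¹ ^ j *
      (Ring.choose ((n : ℝ) + α) (n - j) * Ring.choose ((n : ℝ) + α + β + j) j) := by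
  have hcomp : taylor 1 (jacobiP α β n) = (taylor 1 (shiftedJacobi α β n)).comp (C 2⁻¹ * X) := by
    rw [jacobiP_eq_shiftedJacobi_comp hα hβ, taylor_apply, taylor_apply, comp_assoc, comp_assoc]
    congr 1
    have : (C 2⁻¹ : ℝ[X]) * 2 = 1 := by rw [← C_ofNat, ← C_mul]; norm_num
    simp only [mul_comp, add_comp, X_comp, C_comp, one_comp, C_1]
    linear_combination this
  rw [eval_iterate_derivative_eq_factorial_mul_coeff_taylor, hcomp, comp_C_mul_X_coeff,
    coeff_taylor_one_shiftedJacobi α β hj]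
  ring

theorem choose_mul_choose_mul_beta (hα : -1 < α) (hβ : -1 < β) {n k : ℕ} (hk : k ≤ n) (m : ℕ) :
    Ring.choose ((n : ℝ) + α) (n - k) * Ring.choose ((n : ℝ) + β) k *
        ProbabilityTheory.beta (β + (n - k + m : ℕ) + 1) (α + k + 1) =
      Real.Gamma (n + α + 1) * Real.Gamma (n + β + 1) /
          (n.factorial * Real.Gamma (α + β + n + m + 2)) *
        (n.choose k * (ascPochhammer ℝ m).eval (β + 1 + (n - k : ℕ))) := by
  have hx : 0 < β + 1 + (n - k : ℕ) := by linarith [(n - k).cast_nonneg (α := ℝ)]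
  have hβk : (n : ℝ) - k + β + 1 = β + 1 + (n - k : ℕ) := by rw [Nat.cast_sub hk]; ring
  have hshift : β + (n - k + m : ℕ) + 1 = β + 1 + (n - k : ℕ) + m := by push_cast; ring
  have htotal : β + 1 + (n - k : ℕ) + m + (α + k + 1) = α + β + n + m + 2 := by
    rw [Nat.cast_sub hk]; ring
  have hαk : 0 < α + k + 1 := by linarith [k.cast_nonneg (α := ℝ)]
  have hΓα := (Real.Gamma_pos_of_pos hαk).ne'
  have hΓβ := (Real.Gamma_pos_of_pos hx).ne'
  rw [ring_choose_natCast_add_sub hk (ne_neg_natCast_of_pos hαk), ring_choose_natCast_add hβ hk,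
    hβk, ← Nat.cast_sub hk, Real.Gamma_nat_eq_factorial, Real.Gamma_nat_eq_factorial, hshift,
    ProbabilityTheory.beta, htotal, real_gamma_add_natCast (ne_neg_natCast_of_pos hx),
    Nat.cast_choose ℝ hk]
  field_simp

/-- The last factor is `0` for `m < n`, which is orthogonality, and `1` for `m = n`. -/
theorem integral_shiftedJacobi_mul_pow_mul_weight (hα : -1 < α) (hβ : -1 < β) {m n : ℕ}
    (hm : m ≤ n) :
    ∫ s in (0 : ℝ)..1, (shiftedJacobi α β n).eval s * s ^ m * ((1 - s) ^ α * s ^ β) =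
      Real.Gamma (n + α + 1) * Real.Gamma (n + β + 1) / Real.Gamma (α + β + n + m + 2) *
        (ascPochhammer ℝ m).coeff n := by
  have hexpand (s : ℝ) : (shiftedJacobi α β n).eval s * s ^ m * ((1 - s) ^ α * s ^ β) =
      ∑ k ∈ range (n + 1), Ring.choose ((n : ℝ) + α) (n - k) * Ring.choose ((n : ℝ) + β) k *
        ((s - 1) ^ k * s ^ (n - k + m) * ((1 - s) ^ α * s ^ β)) := by
    rw [shiftedJacobi, eval_finsetSum, sum_mul, sum_mul]
    refine sum_congr rfl fun k _ => ?_
    rw [pow_add]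
    simp only [eval_mul, eval_C, eval_pow, eval_sub, eval_X, eval_one]
    ring
  have hint (k : ℕ) : IntervalIntegrable
      (fun s : ℝ => (s - 1) ^ k * s ^ (n - k + m) * ((1 - s) ^ α * s ^ β)) volume 0 1 :=
    intervalIntegrable_mul_one_sub_rpow_mul_rpow hα hβ (by fun_prop)
  have hdiff := sum_neg_one_pow_mul_choose_mul_eval ((ascPochhammer_natDegree ℝ m).trans_le hm)
    (β + 1)
  simp_rw [hexpand]
  rw [intervalIntegral.integral_finsetSum fun k _ => (hint k).const_mul _]
  simp_rw [intervalIntegral.integral_const_mul,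
    integral_sub_one_pow_mul_pow_mul_one_sub_rpow_mul_rpow hα hβ]
  calc _ = ∑ k ∈ range (n + 1), Real.Gamma (n + α + 1) * Real.Gamma (n + β + 1) /
          (n.factorial * Real.Gamma (α + β + n + m + 2)) *
        ((-1) ^ k * n.choose k * (ascPochhammer ℝ m).eval (β + 1 + (n - k : ℕ))) := by
        refine sum_congr rfl fun k hk => ?_
        linear_combination (-1) ^ k *
          choose_mul_choose_mul_beta hα hβ (mem_range_succ_iff.1 hk) m
    _ = _ := by
        have hn := Nat.cast_ne_zero (R := ℝ).2 n.factorial_ne_zero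
        rw [← mul_sum, hdiff]
        field_simp

theorem integral_shiftedJacobi_mul_eval_mul_weight (hα : -1 < α) (hβ : -1 < β) {n : ℕ} {q : ℝ[X]}
    (hq : q.natDegree ≤ n) :
    ∫ s in (0 : ℝ)..1, (shiftedJacobi α β n).eval s * q.eval s * ((1 - s) ^ α * s ^ β) =
      q.coeff n *
        (Real.Gamma (n + α + 1) * Real.Gamma (n + β + 1) / Real.Gamma (α + β + n + n + 2)) := by
  have hexpand (s : ℝ) : (shiftedJacobi α β n).eval s * q.eval s * ((1 - s) ^ α * s ^ β) =
      ∑ m ∈ range (n + 1), q.coeff m *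
        ((shiftedJacobi α β n).eval s * s ^ m * ((1 - s) ^ α * s ^ β)) := by
    rw [eval_eq_sum_range' (Nat.lt_succ_of_le hq), mul_sum, sum_mul]
    exact sum_congr rfl fun m _ => by ring
  have hint (m : ℕ) : IntervalIntegrable
      (fun s : ℝ => (shiftedJacobi α β n).eval s * s ^ m * ((1 - s) ^ α * s ^ β)) volume 0 1 :=
    intervalIntegrable_mul_one_sub_rpow_mul_rpow hα hβ (by fun_prop)
  have horth {m : ℕ} (hm : m < n) :
      ∫ s in (0 : ℝ)..1, (shiftedJacobi α β n).eval s * s ^ m * ((1 - s) ^ α * s ^ β) = 0 := by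
    rw [integral_shiftedJacobi_mul_pow_mul_weight hα hβ hm.le, coeff_eq_zero_of_natDegree_lt
      ((ascPochhammer_natDegree ℝ m).trans_lt hm), mul_zero]
  have hlead : (ascPochhammer ℝ n).coeff n = 1 := by
    simpa [ascPochhammer_natDegree] using (monic_ascPochhammer ℝ n).coeff_natDegree
  simp_rw [hexpand]
  rw [intervalIntegral.integral_finsetSum fun m _ => (hint m).const_mul _]
  simp_rw [intervalIntegral.integral_const_mul]
  rw [sum_range_succ, sum_eq_zero fun m hm => by rw [horth (mem_range.1 hm), mul_zero], zero_add,
    integral_shiftedJacobi_mul_pow_mul_weight hα hβ le_rfl, hlead, mul_one]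

theorem jacobiNormSq_eq_integral_shiftedJacobi (hα : -1 < α) (hβ : -1 < β) (n : ℕ) :
    jacobiNormSq α β n = 2 ^ (α + β + 1) * ∫ s in (0 : ℝ)..1,
      (shiftedJacobi α β n).eval s * (shiftedJacobi α β n).eval s * ((1 - s) ^ α * s ^ β) := by
  have hsubst := intervalIntegral.smul_integral_comp_mul_sub (a := 0) (b := 1)
    (fun x : ℝ => (jacobiP α β n).eval x ^ 2 * (1 - x) ^ α * (1 + x) ^ β) 2 1
  norm_num only at hsubst
  rw [jacobiNormSq, ← hsubst, smul_eq_mul, Real.rpow_add_one two_ne_zero, mul_comm _ (2 : ℝ),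
    mul_assoc]
  congr 1
  rw [← intervalIntegral.integral_const_mul]
  refine intervalIntegral.integral_congr_Ioo_of_le zero_le_one fun s hs => ?_
  have heval : (jacobiP α β n).eval (2 * s - 1) = (shiftedJacobi α β n).eval s := by
    rw [jacobiP_eq_shiftedJacobi_comp hα hβ, eval_comp]
    simp
  rw [heval, show 1 - (2 * s - 1) = 2 * (1 - s) by ring, show 1 + (2 * s - 1) = 2 * s by ring,
    Real.mul_rpow zero_le_two (sub_nonneg.2 hs.2.le), Real.mul_rpow zero_le_two hs.1.le,
    Real.rpow_add two_pos]
  ring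

theorem jacobiNormSq_eq (hα : -1 < α) (hβ : -1 < β) {n : ℕ} (hn : n ≠ 0) :
    jacobiNormSq α β n = 2 ^ (α + β) / (n + (α + β + 1) / 2) *
      (Real.Gamma (n + α + 1) / Real.Gamma (n + (α + β) + 1) *
        (Real.Gamma (n + β + 1) / Real.Gamma (n + 1))) := by
  have hn1 : (1 : ℝ) ≤ n := Nat.one_le_cast.2 (Nat.one_le_iff_ne_zero.2 hn)
  have hsub : (n : ℝ) + α + β + n - n + 1 = n + (α + β) + 1 := by ring
  have hchoose := ring_choose_eq_gamma_div (x := n + α + β + n) (m := n)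
    (hsub ▸ ne_neg_natCast_of_pos (by linarith))
  have hΓ : Real.Gamma (α + β + n + n + 2) =
      2 * (n + (α + β + 1) / 2) * Real.Gamma (n + α + β + n + 1) := by
    rw [show α + β + n + n + 2 = n + α + β + n + 1 + 1 by ring, Real.Gamma_add_one (by linarith)]
    ring
  have hΓ0 := (Real.Gamma_pos_of_pos (show 0 < (n : ℝ) + α + β + n + 1 by linarith)).ne'
  rw [jacobiNormSq_eq_integral_shiftedJacobi hα hβ,
    integral_shiftedJacobi_mul_eval_mul_weight hα hβ (natDegree_shiftedJacobi_le α β n),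
    coeff_shiftedJacobi_self, hchoose, hsub, hΓ, Real.rpow_add_one two_ne_zero]
  field_simp

theorem jacobiNormSq_isEquivalent (hα : -1 < α) (hβ : -1 < β) :
    jacobiNormSq α β ~[atTop] fun n : ℕ => 2 ^ (α + β) / (n : ℝ) := by
  have hΓβ : (fun n : ℕ => Real.Gamma (n + β + 1) / Real.Gamma (n + 1)) ~[atTop]
      fun n => (n : ℝ) ^ β := by
    simpa using gamma_natCast_add_div_gamma_isEquivalent β 0
  have hequiv := ((IsEquivalent.refl (u := fun _ : ℕ => (2 : ℝ) ^ (α + β))).div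
    (natCast_add_isEquivalent ((α + β + 1) / 2))).mul
      ((gamma_natCast_add_div_gamma_isEquivalent α (α + β)).mul hΓβ)
  refine (hequiv.congr_left ?_).congr_right ?_
  · filter_upwards [eventually_ne_atTop 0] with n hn
    exact (jacobiNormSq_eq hα hβ hn).symm
  · filter_upwards [eventually_gt_atTop 0] with n hn
    have hcancel : (n : ℝ) ^ (α - (α + β)) * (n : ℝ) ^ β = 1 := by
      rw [← Real.rpow_add (Nat.cast_pos.2 hn), sub_add_cancel_left, neg_add_cancel, Real.rpow_zero]
    simp only [Pi.mul_apply, Pi.div_apply, hcancel, mul_one]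

theorem eval_one_iterate_derivative_jacobiP_isEquivalent (hα : -1 < α) (hβ : -1 < β) (j : ℕ) :
    (fun n => (derivative^[j] (jacobiP α β n)).eval 1) ~[atTop]
      fun n : ℕ => (n : ℝ) ^ (α + 2 * j) / (Real.Gamma (α + j + 1) * 2 ^ j) := by
  have hαj : 0 < α + j + 1 := by linarith [j.cast_nonneg (α := ℝ)]
  have hchoose := (ring_choose_natCast_add_sub_isEquivalent (ne_neg_natCast_of_pos hαj)).mul
    (ring_choose_natCast_add_natCast_isEquivalent (α + β) j)
  refine (((IsEquivalent.refl (u := fun _ : ℕ => (j.factorial : ℝ) * 2⁻¹ ^ j)).mul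
    hchoose).congr_left ?_).congr_right ?_
  · filter_upwards [eventually_ge_atTop j] with n hn
    rw [eval_one_iterate_derivative_jacobiP hα hβ hn, Pi.mul_apply, Pi.mul_apply, add_assoc _ α β]
  · filter_upwards [eventually_ne_atTop 0] with n hn
    have hpow : (n : ℝ) ^ (α + 2 * j) = (n : ℝ) ^ (α + j) * (n : ℝ) ^ j := by
      rw [← Real.rpow_add_natCast (Nat.cast_ne_zero.2 hn)]
      ring_nf
    have hfac : (j.factorial : ℝ) ≠ 0 := Nat.cast_ne_zero.2 j.factorial_ne_zero
    rw [Pi.mul_apply, Pi.mul_apply, hpow, inv_pow]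
    field_simp

theorem kernK_summand_isEquivalent (hα : -1 < α) (hβ : -1 < β) (j k : ℕ) :
    (fun n => (derivative^[j] (jacobiP α β n)).eval 1 * (derivative^[k] (jacobiP α β n)).eval 1 /
      jacobiNormSq α β n) ~[atTop]
    fun n : ℕ => (Real.Gamma (α + j + 1) * Real.Gamma (α + k + 1) * 2 ^ (α + β + j + k))⁻¹ *
      (n : ℝ) ^ (2 * α + 2 * j + 2 * k + 1) := by
  refine (((eval_one_iterate_derivative_jacobiP_isEquivalent hα hβ j).mul
    (eval_one_iterate_derivative_jacobiP_isEquivalent hα hβ k)).div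
      (jacobiNormSq_isEquivalent hα hβ)).congr_right ?_
  filter_upwards [eventually_gt_atTop 0] with n hn
  have hn0 : (0 : ℝ) < n := Nat.cast_pos.2 hn
  have hpow : (n : ℝ) ^ (2 * α + 2 * j + 2 * k + 1) =
      (n : ℝ) ^ (α + 2 * j) * (n : ℝ) ^ (α + 2 * k) * n := by
    rw [← Real.rpow_add hn0, ← Real.rpow_add_one hn0.ne']
    ring_nf
  rw [Pi.div_apply, Pi.mul_apply, hpow, Real.rpow_add_natCast two_ne_zero,
    Real.rpow_add_natCast two_ne_zero]
  field_simp

theorem kernK_sub_one_isEquivalent (hα : -1 < α) (hβ : -1 < β) (j k : ℕ) :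
    (fun n => kernK α β j k (n - 1) 1 1) ~[atTop] fun n : ℕ =>
      (Real.Gamma (α + j + 1) * Real.Gamma (α + k + 1) * 2 ^ (α + β + j + k) *
        (2 * (α + j + k + 1)))⁻¹ * (n : ℝ) ^ (2 * α + 2 * j + 2 * k + 2) := by
  have hj : (0 : ℝ) ≤ j := j.cast_nonneg
  have hk : (0 : ℝ) ≤ k := k.cast_nonneg
  have hΓj := Real.Gamma_pos_of_pos (show 0 < α + j + 1 by linarith)
  have hΓk := Real.Gamma_pos_of_pos (show 0 < α + k + 1 by linarith)
  have hsum := sum_range_isEquivalent_of_rpow (by linarith) (by positivity)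
    (kernK_summand_isEquivalent hα hβ j k)
  refine (hsum.congr_left ?_).congr_right (Eventually.of_forall fun n => ?_)
  · filter_upwards [eventually_gt_atTop 0] with n hn
    rw [kernK, Nat.sub_add_cancel hn]
  · rw [show 2 * α + 2 * j + 2 * k + 1 + 1 = 2 * α + 2 * j + 2 * k + 2 by ring,
      show 2 * α + 2 * j + 2 * k + 2 = 2 * (α + j + k + 1) by ring, mul_inv _ (2 * _)]
    ring

end Jacobi

/-- asymptotics of the kernel `K_{n-1}^{(j,k)}(1,1)`. -/
theorem kernK_asymptotics (α β : ℝ) (hα : -1 < α) (hβ : -1 < β) (j k : ℕ) :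
    Filter.Tendsto
      (fun n : ℕ => kernK α β j k (n - 1) 1 1 / (n : ℝ) ^ (2 * α + 2 * j + 2 * k + 2))
      Filter.atTop
      (nhds (1 / (Real.Gamma (α + j + 1) * Real.Gamma (α + k + 1) *
        (2 : ℝ) ^ (α + β + j + k + 1) * (α + j + k + 1)))) := by
  refine (kernK_sub_one_isEquivalent hα hβ j k).symm.div IsEquivalent.refl |>.tendsto_nhds
    (tendsto_const_nhds.congr' ?_)
  filter_upwards [eventually_gt_atTop 0] with n hn
  have hn0 : (n : ℝ) ^ (2 * α + 2 * j + 2 * k + 2) ≠ 0 :=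
    (Real.rpow_pos_of_pos (Nat.cast_pos.2 hn) _).ne'
  rw [Pi.div_apply, mul_div_cancel_right₀ _ hn0, Real.rpow_add_one two_ne_zero, one_div]
  congr 1
  ring
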